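/- Let a be an additive and positive parametric sequence, J ≥ 2, θ ∈ (0,∞)^J, p a pmf on ℕ, and let P be the convolution splitting distribution P(y) = p(|y|)·∏_{j=1}^{J} a_{θ_j}(y_j)/a_{|θ|}(|y|) on ℕ^J. Let I be a nonempty proper subset of {1,…,J}. Then the marginal distribution of the subvector indexed by I is itself a convolution splitting distribution: for every z : I → ℕ, ∑_{y ∈ ℕ^J : y_j = z_j for all j∈I} P(y) = (∏_{j∈I} a_{θ_j}(z_j)/a_{|θ_I|}(|z|))·q(|z|), where |z| = ∑_{j∈I} z_j, |θ_I| = ∑_{j∈I} θ_j, |θ_{−I}| = ∑_{j∉I} θ_j, and q(n) = ∑_{k ≥ n} (a_{|θ_I|}(n)·a_{|θ_{−I}|}(k−n)/a_{|θ|}(k))·p(k). -/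

import Mathlib

theorem conv_aux (a : ℝ → ℕ → ℝ)
    (ha_add : ∀ θ θ' : ℝ, 0 < θ → 0 < θ' → ∀ n : ℕ,
      ∑ y ∈ Finset.range (n + 1), a θ y * a θ' (n - y) = a (θ + θ') n)
    (J : ℕ) (θ : Fin J → ℝ) (hθ : ∀ j, 0 < θ j) (s : Finset (Fin J)) (hs : s.Nonempty) :
    ∀ n : ℕ, ∑ y ∈ Finset.piAntidiag s n, ∏ j ∈ s, a (θ j) (y j) = a (∑ j ∈ s, θ j) n := by
  induction hs using Finset.Nonempty.cons_induction with
  | singleton i =>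
    intro n
    rw [← Finset.cons_empty, Finset.piAntidiag_cons, Finset.sum_disjiUnion,
      Finset.Nat.sum_antidiagonal_eq_sum_range_succ_mk, Finset.sum_eq_single n]
    · simp
    · intro b hb hbn
      have : n - b ≠ 0 := by
        have := Finset.mem_range.1 hb
        omega
      simp [this]
    · simp
  | cons i s hi hs ih =>
    intro n
    rw [Finset.piAntidiag_cons, Finset.sum_disjiUnion,
      Finset.Nat.sum_antidiagonal_eq_sum_range_succ_mk, Finset.sum_cons,
      ← ha_add _ _ (hθ i) (Finset.sum_pos (fun j _ => hθ j) hs)]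
    refine Finset.sum_congr rfl fun k hk => ?_
    rw [Finset.sum_map, ← ih, Finset.mul_sum]
    refine Finset.sum_congr rfl fun y hy => ?_
    rw [Finset.prod_cons]
    have h0 : y i = 0 := by
      by_contra h
      exact hi ((Finset.mem_piAntidiag.1 hy).2 i h)
    congr 1
    · simp [h0]
    · refine Finset.prod_congr rfl fun j hj => ?_
      have : j ≠ i := fun h => hi (h ▸ hj)
      simp [this]

def fiberEquiv (J : ℕ) (I : Finset (Fin J)) (z : Fin J → ℕ) :
    (Σ m : ℕ, {w : Fin J → ℕ // w ∈ Finset.piAntidiag Iᶜ m}) ≃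
      {y : Fin J → ℕ // ∀ j ∈ I, y j = z j} where
  toFun x := ⟨fun j => if j ∈ I then z j else x.2.1 j, fun j hj => by simp [hj]⟩
  invFun y := ⟨∑ j ∈ Iᶜ, y.1 j, fun j => if j ∈ I then 0 else y.1 j, by
    rw [Finset.mem_piAntidiag]
    constructor
    · refine Finset.sum_congr rfl fun j hj => ?_
      simp [Finset.mem_compl.1 hj]
    · intro j hj
      rw [Finset.mem_compl]
      intro h
      simp [h] at hj⟩
  left_inv := by
    rintro ⟨m, w, hw⟩
    obtain ⟨h1, h2⟩ := Finset.mem_piAntidiag.1 hw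
    have e1 : ∑ j ∈ Iᶜ, (if j ∈ I then z j else w j) = m := by
      rw [← h1]
      refine Finset.sum_congr rfl fun j hj => ?_
      simp [Finset.mem_compl.1 hj]
    have e2 : (fun j => if j ∈ I then 0 else (if j ∈ I then z j else w j)) = w := by
      funext j
      by_cases hj : j ∈ I
      · by_cases h : w j = 0
        · simp [hj, h]
        · exact absurd hj (Finset.mem_compl.1 (h2 j h))
      · simp [hj]
    subst e1
    simp only [Sigma.mk.injEq, heq_eq_eq, true_and]
    exact Subtype.ext e2
  right_inv := by
    rintro ⟨y, hy⟩
    apply Subtype.ext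
    funext j
    by_cases hj : j ∈ I
    · simp [hj, hy j hj]
    · simp [hj]

def shiftEquiv (n : ℕ) : ℕ ≃ {k : ℕ // n ≤ k} where
  toFun m := ⟨n + m, by omega⟩
  invFun k := k.1 - n
  left_inv m := by simp
  right_inv k := Subtype.ext (by have := k.2; simp; omega)

theorem tsum_sigma_nonneg {β : ℕ → Type} (f : (Σ m, β m) → ℝ) [∀ m, Fintype (β m)]
    (hf : ∀ x, 0 ≤ f x) : ∑' x, f x = ∑' m, ∑ b : β m, f ⟨m, b⟩ := by
  have key := summable_sigma_of_nonneg hf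
  by_cases h : Summable f
  · rw [h.tsum_sigma]
    simp only [tsum_fintype]
  · rw [tsum_eq_zero_of_not_summable h, tsum_eq_zero_of_not_summable]
    intro h'
    apply h
    rw [key]
    exact ⟨fun m => (hasSum_fintype _).summable, by simpa only [tsum_fintype] using h'⟩

/-- the marginal distribution of a subvector of a convolution splitting
distribution is itself a convolution splitting distribution: for every `z : I → ℕ`,
`P(Y_I = z) = (∏_{j∈I} a (θ j) (z j) / a |θ_I| |z|) * q |z|`, where
`q n = ∑_{k ≥ n} (a |θ_I| n * a |θ_{-I}| (k-n) / a |θ| k) * p k`. -/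
theorem marginal_subvector_of_convolution_splitting
    (a : ℝ → ℕ → ℝ)
    (ha_pos : ∀ θ : ℝ, 0 < θ → ∀ y : ℕ, 0 < a θ y)
    (ha_add : ∀ θ θ' : ℝ, 0 < θ → 0 < θ' → ∀ n : ℕ,
      ∑ y ∈ Finset.range (n + 1), a θ y * a θ' (n - y) = a (θ + θ') n)
    (J : ℕ) (hJ : 2 ≤ J) (θ : Fin J → ℝ) (hθ : ∀ j, 0 < θ j)
    (p : ℕ → ℝ) (hp0 : ∀ n, 0 ≤ p n) (hp1 : ∑' n : ℕ, p n = 1)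
    (P : (Fin J → ℕ) → ℝ)
    (hP : ∀ y : Fin J → ℕ,
      P y = p (∑ j, y j) * (∏ j, a (θ j) (y j)) / a (∑ j, θ j) (∑ j, y j))
    (I : Finset (Fin J)) (hI : I.Nonempty) (hI' : I ≠ Finset.univ)
    (q : ℕ → ℝ)
    (hq : ∀ n : ℕ, q n = ∑' k : {k : ℕ // n ≤ k},
      a (∑ j ∈ I, θ j) n * a (∑ j ∈ Iᶜ, θ j) (k.val - n) / a (∑ j, θ j) k.val * p k.val) :
    ∀ z : Fin J → ℕ,
      ∑' y : {y : Fin J → ℕ // ∀ j ∈ I, y j = z j}, P y.val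
        = ((∏ j ∈ I, a (θ j) (z j)) / a (∑ j ∈ I, θ j) (∑ j ∈ I, z j)) * q (∑ j ∈ I, z j) := by
  intro z
  have hIc : (Iᶜ).Nonempty := by
    rw [Finset.nonempty_iff_ne_empty]
    intro h
    exact hI' (Finset.compl_eq_empty_iff _ |>.1 h)
  have hJne : (Finset.univ : Finset (Fin J)).Nonempty := hI.mono (Finset.subset_univ _)
  have hPnn : ∀ y, 0 ≤ P y := fun y => by
    rw [hP]
    exact div_nonneg (mul_nonneg (hp0 _)
      (Finset.prod_nonneg fun j _ => (ha_pos _ (hθ j) _).le))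
      (ha_pos _ (Finset.sum_pos (fun j _ => hθ j) hJne) _).le
  have hA := (ha_pos _ (Finset.sum_pos (fun j _ => hθ j) hI) (∑ j ∈ I, z j)).ne'
  rw [hq, ← (fiberEquiv J I z).tsum_eq, ← (shiftEquiv _).tsum_eq,
    tsum_sigma_nonneg _ (fun x => hPnn _), ← tsum_mul_left]
  refine tsum_congr fun m => ?_
  have hterm : ∀ w : {w : Fin J → ℕ // w ∈ Finset.piAntidiag Iᶜ m},
      P (fiberEquiv J I z ⟨m, w⟩).1 =
        p (∑ j ∈ I, z j + m) * (∏ j ∈ I, a (θ j) (z j)) / a (∑ j, θ j) (∑ j ∈ I, z j + m) *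
          ∏ j ∈ Iᶜ, a (θ j) (w.1 j) := by
    rintro ⟨w, hw⟩
    obtain ⟨h1, h2⟩ := Finset.mem_piAntidiag.1 hw
    have e : (fiberEquiv J I z ⟨m, w, hw⟩).1 = fun j => if j ∈ I then z j else w j := rfl
    have es : ∑ j, (if j ∈ I then z j else w j) = ∑ j ∈ I, z j + m := by
      rw [← Finset.sum_add_sum_compl I, ← h1]
      congr 1
      · exact Finset.sum_congr rfl fun j hj => by simp [hj]
      · exact Finset.sum_congr rfl fun j hj => by simp [Finset.mem_compl.1 hj]
    have ep : ∏ j, a (θ j) (if j ∈ I then z j else w j) =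
        (∏ j ∈ I, a (θ j) (z j)) * ∏ j ∈ Iᶜ, a (θ j) (w j) := by
      rw [← Finset.prod_mul_prod_compl I]
      congr 1
      · exact Finset.prod_congr rfl fun j hj => by simp [hj]
      · exact Finset.prod_congr rfl fun j hj => by simp [Finset.mem_compl.1 hj]
    rw [e, hP]
    simp only [es, ep]
    ring
  rw [Finset.sum_congr rfl fun w _ => hterm w, ← Finset.mul_sum,
    Finset.sum_coe_sort (Finset.piAntidiag Iᶜ m) (fun w => ∏ j ∈ Iᶜ, a (θ j) (w j)),
    conv_aux a ha_add J θ hθ _ hIc]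
  have e3 : (shiftEquiv (∑ j ∈ I, z j) m).1 = ∑ j ∈ I, z j + m := rfl
  rw [e3, Nat.add_sub_cancel_left]
  field_simp
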